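/- arXiv:2512.00270 — 5 statements merged into one kernel-verified Lean document; each statement's English description precedes it below -/
import Mathlib

section
/- Let F : S → G(S) be a Markov chain on a measurable space S and let (A,B) be a pair of measurable subsets of S. Then ℙ_{s₀}[Streett(A,B)] = 1 for every initial state s₀ ∈ S if and only if ℙ_{s₀}[step_{s₀}^{(A,B)} < ∞] = 1 for every initial state s₀ ∈ S. -/
open MeasureTheory ProbabilityTheory Set
open scoped ENNReal NNReal

variable {S : Type*} [MeasurableSpace S]

/-- Prepend an initial state to a trace. -/
def prep (s₀ : S) (ω : ℕ → S) : ℕ → S := fun n => Nat.rec s₀ (fun k _ => ω k) n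

/-- `stepCount A B s₀ ω` is the number of indices `i` with
`0 ≤ i < min {j | s_j ∈ B}` and `s_i ∈ A`, where `s₀ s₁ s₂ ⋯` is the trace `ω`
prefixed with the initial state `s₀`. -/
noncomputable def stepCount (A B : Set S) (s₀ : S) (ω : ℕ → S) : ℕ∞ :=
  {i : ℕ | prep s₀ ω i ∈ A ∧ ∀ j ≤ i, prep s₀ ω j ∉ B}.encard

/-- The Streett condition for the pair `(A, B)`: either `A` is visited only
finitely often, or `B` is visited infinitely often. -/
def streett (A B : Set S) : Set (ℕ → S) :=
  {ω | {i : ℕ | ω i ∈ A}.Finite ∨ {i : ℕ | ω i ∈ B}.Infinite}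

theorem aux_meas_prep : Measurable (fun p : S × (ℕ → S) => prep p.1 p.2) := by
  rw [measurable_pi_iff]
  intro n
  cases n with
  | zero => exact measurable_fst
  | succ k => exact (measurable_pi_apply k).comp measurable_snd

theorem aux_fin_iff (s : Set ℕ) : s.Finite ↔ ∃ N, ∀ i, N ≤ i → i ∉ s := by
  constructor
  · intro h
    obtain ⟨N, hN⟩ := h.bddAbove
    exact ⟨N + 1, fun i hi his => by have := hN his; omega⟩
  · rintro ⟨N, hN⟩
    refine (Set.finite_lt_nat N).subset fun i hi => ?_
    by_contra h
    exact hN i (not_lt.1 h) hi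

/-- Traces with finitely many steps. -/
def auxT (A B : Set S) : Set (ℕ → S) :=
  {τ | {i : ℕ | τ i ∈ A ∧ ∀ j ≤ i, τ j ∉ B}.Finite}

theorem aux_meas_T {A B : Set S} (hA : MeasurableSet A) (hB : MeasurableSet B) :
    MeasurableSet (auxT A B) := by
  have h : auxT A B = ⋃ N : ℕ, ⋂ i : ℕ, ⋂ _ : N ≤ i,
      ({τ : ℕ → S | τ i ∈ A} ∩ ⋂ j : ℕ, ⋂ _ : j ≤ i, {τ : ℕ → S | τ j ∈ B}ᶜ)ᶜ := by
    ext τ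
    simp only [auxT, mem_setOf_eq, aux_fin_iff, mem_iUnion, mem_iInter, mem_compl_iff, mem_inter_iff]
  rw [h]
  refine .iUnion fun N => .iInter fun i => .iInter fun _ => .compl (.inter ?_ ?_)
  · exact measurable_pi_apply i hA
  · exact .iInter fun j => .iInter fun _ => .compl (measurable_pi_apply j hB)

theorem aux_meas_streett {A B : Set S} (hA : MeasurableSet A) (hB : MeasurableSet B) :
    MeasurableSet (streett A B) := by
  have h : ∀ C : Set S, MeasurableSet C → MeasurableSet {τ : ℕ → S | {i : ℕ | τ i ∈ C}.Finite} := by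
    intro C hC
    have := aux_meas_T hC (MeasurableSet.empty)
    simpa [auxT] using this
  exact (h A hA).union (h B hB).compl

theorem aux_step (F : Kernel S S) (P : Kernel S (ℕ → S)) [IsMarkovKernel P]
    (hP : ∀ s₀ : S, (P s₀ : Measure (ℕ → S)) = (F s₀).bind fun s₁ => (P s₁).map (prep s₁))
    (T : Set (ℕ → S)) (hT : MeasurableSet T)
    (h : ∀ s, ∀ᵐ ω ∂(P s), prep s ω ∈ T) (s : S) : ∀ᵐ ω ∂(P s), ω ∈ T := by
  have hp : ∀ s : S, Measurable (prep s) := fun s =>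
    aux_meas_prep.comp (measurable_const.prodMk measurable_id)
  have hm : Measurable fun s₁ => (P s₁).map (prep s₁) := by
    have := ((Kernel.id ×ₖ P).map (fun p : S × (ℕ → S) => prep p.1 p.2)).measurable
    convert this using 2 with s₁
    rw [Kernel.map_apply _ aux_meas_prep, Kernel.prod_apply, Kernel.id_apply, Measure.dirac_prod,
      Measure.map_map aux_meas_prep (by fun_prop)]
    rfl
  rw [hP s, ae_iff]
  change (Measure.bind _ _) Tᶜ = 0
  rw [Measure.bind_apply hT.compl hm.aemeasurable]
  have : ∀ s₁, (P s₁).map (prep s₁) Tᶜ = 0 := fun s₁ => by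
    rw [Measure.map_apply (hp s₁) hT.compl]
    exact h s₁
  simp [this]

theorem aux_shift (F : Kernel S S) (P : Kernel S (ℕ → S)) [IsMarkovKernel P]
    (hP : ∀ s₀ : S, (P s₀ : Measure (ℕ → S)) = (F s₀).bind fun s₁ => (P s₁).map (prep s₁))
    (T : Set (ℕ → S)) (hT : MeasurableSet T)
    (h : ∀ s, ∀ᵐ ω ∂(P s), prep s ω ∈ T) (n : ℕ) :
    ∀ s, ∀ᵐ ω ∂(P s), (fun k => prep s ω (k + n)) ∈ T := by
  induction n with
  | zero => exact h
  | succ n ih =>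
    intro s
    exact aux_step F P hP {τ | (fun k => τ (k + n)) ∈ T}
      ((measurable_pi_iff.2 fun k => measurable_pi_apply (k + n)) hT) ih s

theorem streett_as_iff_null_recurrent
    (F : Kernel S S) [IsMarkovKernel F]
    (P : Kernel S (ℕ → S)) [IsMarkovKernel P]
    (hP : ∀ s₀ : S, (P s₀ : Measure (ℕ → S)) = (F s₀).bind fun s₁ => (P s₁).map (prep s₁))
    (A B : Set S) (hA : MeasurableSet A) (hB : MeasurableSet B) :
    (∀ s₀ : S, P s₀ (streett A B) = 1) ↔
      (∀ s₀ : S, P s₀ {ω | stepCount A B s₀ ω < ⊤} = 1) := by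
  have hp : ∀ s : S, Measurable (prep s) := fun s =>
    aux_meas_prep.comp (measurable_const.prodMk measurable_id)
  have hset : ∀ s : S, {ω | stepCount A B s ω < ⊤} = prep s ⁻¹' auxT A B := by
    intro s
    ext ω
    simp [stepCount, auxT, Set.encard_lt_top_iff]
  have hTm := aux_meas_T hA hB
  have e1 : ∀ s, P s (streett A B) = 1 ↔ ∀ᵐ ω ∂(P s), ω ∈ streett A B := fun s =>
    (mem_ae_iff_prob_eq_one (aux_meas_streett hA hB)).symm
  have e2 : ∀ s, P s {ω | stepCount A B s ω < ⊤} = 1 ↔ ∀ᵐ ω ∂(P s), prep s ω ∈ auxT A B :=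
    fun s => by
      rw [hset s]
      exact (mem_ae_iff_prob_eq_one (hp s hTm)).symm
  simp only [e1, e2]
  constructor
  · intro h s
    filter_upwards [h s] with ω hω
    rw [auxT, mem_setOf_eq, aux_fin_iff]
    rcases hω with hω | hω
    · obtain ⟨N, hN⟩ := (aux_fin_iff _).1 hω
      refine ⟨N + 1, fun i hi hiA => ?_⟩
      obtain ⟨k, rfl⟩ : ∃ k, i = k + 1 := ⟨i - 1, by omega⟩
      exact hN k (by omega) hiA.1
    · obtain ⟨j, hj⟩ := hω.nonempty
      exact ⟨j + 1, fun i hi hiA => hiA.2 (j + 1) hi hj⟩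
  · intro h s
    have := ae_all_iff.2 fun n => aux_shift F P hP _ hTm h n s
    filter_upwards [this] with ω hω
    by_cases hBi : {i : ℕ | ω i ∈ B}.Infinite
    · exact Or.inr hBi
    · left
      obtain ⟨N, hN⟩ := (aux_fin_iff _).1 (Set.not_infinite.1 hBi)
      obtain ⟨M, hM⟩ := (aux_fin_iff _).1 (hω (N + 1))
      refine (aux_fin_iff _).2 ⟨N + M, fun i hi hiA => hM (i - N) (by omega) ⟨?_, ?_⟩⟩
      · have : i - N + (N + 1) = i + 1 := by omega
        simp only [this]
        exact hiA
      · intro j _ hjB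
        exact hN (j + N) (by omega) hjB
end

section
/- Let F : S → G(S) be a Markov chain on a measurable space S and let A, B ⊆ S be measurable. Define K_E on the ω-cpo of measurable functions S → [0,∞] (ordered pointwise) by (K_E η)(x) = (X η)(x) + 1 if x ∈ A∖B, (K_E η)(x) = 0 if x ∈ B, and (K_E η)(x) = (X η)(x) otherwise. Then K_E is Scott-continuous and its least fixed point μK_E = sup_n K_E^n(0) satisfies E_{s₀}[step_{s₀}^{(A,B)}] = (μK_E)(s₀) for every s₀ ∈ S. -/
open MeasureTheory ProbabilityTheory Set
open scoped ENNReal NNReal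

variable {S : Type*} [MeasurableSpace S]

/-- The next-time operator: `(𝕏 g)(s) = ∫ g dF(s)`. -/
noncomputable def nextTime (F : Kernel S S) (g : S → ℝ≥0∞) : S → ℝ≥0∞ :=
  fun s => ∫⁻ y, g y ∂(F s)

open scoped Classical in
/-- The monotone function `K_E` whose least fixed point is the expected number of
`A`-steps until reaching `B`. -/
noncomputable def KE (F : Kernel S S) (A B : Set S) (η : S → ℝ≥0∞) : S → ℝ≥0∞ := fun x =>
  if x ∈ B then 0 else if x ∈ A then nextTime F η x + 1 else nextTime F η x

theorem prep_meas (i : ℕ) : Measurable (fun p : S × (ℕ → S) => prep p.1 p.2 i) := by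
  cases i with
  | zero => exact measurable_fst
  | succ k => exact (measurable_pi_apply k).comp measurable_snd

open scoped Classical in
/-- Indicator that index `i` is counted. -/
noncomputable def uInd (A B : Set S) (i : ℕ) (s : S) (ω : ℕ → S) : ℝ≥0∞ :=
  if prep s ω i ∈ A ∧ ∀ j ≤ i, prep s ω j ∉ B then 1 else 0

theorem uInd_meas {A B : Set S} (hA : MeasurableSet A) (hB : MeasurableSet B) (i : ℕ) :
    Measurable (fun p : S × (ℕ → S) => uInd A B i p.1 p.2) := by
  unfold uInd
  refine Measurable.ite ?_ measurable_const measurable_const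
  refine MeasurableSet.inter (prep_meas i hA) ?_
  have : {p : S × (ℕ → S) | ∀ j ≤ i, prep p.1 p.2 j ∉ B}
      = ⋂ j, ⋂ (_ : j ≤ i), (fun p : S × (ℕ → S) => prep p.1 p.2 j) ⁻¹' Bᶜ := by
    ext p; simp
  change MeasurableSet {p : S × (ℕ → S) | ∀ j ≤ i, prep p.1 p.2 j ∉ B}
  rw [this]
  exact MeasurableSet.iInter fun j => MeasurableSet.iInter fun _ => prep_meas j hB.compl

theorem uInd_zero (A B : Set S) (s : S) (ω : ℕ → S) [Decidable (s ∈ A)] [Decidable (s ∈ B)] :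
    uInd A B 0 s ω = if s ∈ B then 0 else if s ∈ A then 1 else 0 := by
  have h0 : prep s ω 0 = s := rfl
  by_cases h1 : s ∈ B <;> by_cases h2 : s ∈ A <;> simp [uInd, h0, h1, h2]

theorem uInd_succ (A B : Set S) (i : ℕ) (s t : S) (ω : ℕ → S) [Decidable (s ∈ B)] :
    uInd A B (i + 1) s (prep t ω) = if s ∈ B then 0 else uInd A B i t ω := by
  have h0 : ∀ j, prep s (prep t ω) (j + 1) = prep t ω j := fun _ => rfl
  have h1 : prep s (prep t ω) 0 = s := rfl
  have h2 : (∀ j ≤ i + 1, prep s (prep t ω) j ∉ B) ↔ (s ∉ B ∧ ∀ j ≤ i, prep t ω j ∉ B) := by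
    constructor
    · intro h
      exact ⟨h 0 (Nat.zero_le _), fun j hj => h (j + 1) (by omega)⟩
    · rintro ⟨h, h'⟩ j hj
      cases j with
      | zero => exact h
      | succ k => exact h' k (by omega)
  unfold uInd
  by_cases h : s ∈ B
  · rw [if_pos h, if_neg]
    exact fun h3 => (h2.1 h3.2).1 h
  · rw [if_neg h]
    classical exact if_congr ⟨fun h3 => ⟨h3.1, (h2.1 h3.2).2⟩, fun h3 => ⟨h3.1, h2.2 ⟨h, h3.2⟩⟩⟩ rfl rfl

theorem stepCount_eq (A B : Set S) (s : S) (ω : ℕ → S) :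
    (stepCount A B s ω : ℝ≥0∞) = ∑' i, uInd A B i s ω := by
  classical
  unfold stepCount
  rw [← Measure.count_apply (MeasurableSet.of_discrete), ← lintegral_indicator_one
    (MeasurableSet.of_discrete), lintegral_count]
  refine tsum_congr fun i => ?_
  simp [uInd, Set.indicator_apply]

theorem bind_lint (F : Kernel S S) (P : Kernel S (ℕ → S)) [IsMarkovKernel P]
    (hP : ∀ s₀ : S, (P s₀ : Measure (ℕ → S)) = (F s₀).bind fun s₁ => (P s₁).map (prep s₁))
    (s : S) (f : (ℕ → S) → ℝ≥0∞) (hf : Measurable f) :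
    ∫⁻ ω, f ω ∂(P s) = ∫⁻ t, ∫⁻ ω, f (prep t ω) ∂(P t) ∂(F s) := by
  have hpm : Measurable (fun p : S × (ℕ → S) => prep p.1 p.2) :=
    measurable_pi_lambda _ prep_meas
  have hp : ∀ t : S, Measurable (prep t) := fun t => hpm.comp measurable_prodMk_left
  have hm : Measurable (fun t => (P t).map (prep t)) := by
    refine Measure.measurable_of_measurable_coe _ fun u hu => ?_
    have : (fun t => (P t).map (prep t) u)
        = fun t => P t (Prod.mk t ⁻¹' ((fun p : S × (ℕ → S) => prep p.1 p.2) ⁻¹' u)) := by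
      ext t
      rw [Measure.map_apply (hp t) hu]; rfl
    rw [this]
    exact Kernel.measurable_kernel_prodMk_left (hpm hu)
  rw [hP s, Measure.lintegral_bind hm.aemeasurable hf.aemeasurable]
  refine lintegral_congr fun t => ?_
  rw [lintegral_map hf (hp t)]

theorem KE_meas (F : Kernel S S) {A B : Set S} (hA : MeasurableSet A)
    (hB : MeasurableSet B) {h : S → ℝ≥0∞} (hh : Measurable h) : Measurable (KE F A B h) := by
  have : Measurable (nextTime F h) := hh.lintegral_kernel
  exact Measurable.ite hB measurable_const (Measurable.ite hA (this.add_const 1) this)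

theorem KE_mono (F : Kernel S S) (A B : Set S) : Monotone (KE F A B) := by
  intro g h hgh x
  have : nextTime F g x ≤ nextTime F h x := lintegral_mono hgh
  unfold KE
  split_ifs
  · exact le_rfl
  · gcongr
  · exact this

theorem KE_sup (F : Kernel S S) (A B : Set S) (c : ℕ → S → ℝ≥0∞) (hc : ∀ n, Measurable (c n))
    (hm : Monotone c) : KE F A B (fun x => ⨆ n, c n x) = fun x => ⨆ n, KE F A B (c n) x := by
  ext x
  have : nextTime F (fun x => ⨆ n, c n x) x = ⨆ n, nextTime F (c n) x := lintegral_iSup hc hm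
  unfold KE
  rw [this]
  split_ifs
  · simp
  · rw [ENNReal.iSup_add]
  · rfl

theorem KE_iter (F : Kernel S S) [IsMarkovKernel F] (P : Kernel S (ℕ → S)) [IsMarkovKernel P]
    (hP : ∀ s₀ : S, (P s₀ : Measure (ℕ → S)) = (F s₀).bind fun s₁ => (P s₁).map (prep s₁))
    {A B : Set S} (hA : MeasurableSet A) (hB : MeasurableSet B) (n : ℕ) :
    ∀ s, ∫⁻ ω, ∑ i ∈ Finset.range n, uInd A B i s ω ∂(P s) = (KE F A B)^[n] (fun _ => 0) s := by
  classical
  have hu : ∀ i s, Measurable (uInd A B i s) := fun i s =>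
    (uInd_meas hA hB i).comp measurable_prodMk_left
  induction n with
  | zero => intro s; simp
  | succ n ih =>
    intro s
    rw [Function.iterate_succ_apply', bind_lint F P hP s _
      (Finset.measurable_fun_sum _ fun i _ => hu i s)]
    simp_rw [Finset.sum_range_succ', uInd_succ, uInd_zero]
    unfold KE
    by_cases h1 : s ∈ B
    · simp [h1]
    · have key : ∀ t, ∫⁻ ω, (∑ i ∈ Finset.range n, uInd A B i t ω) + (if s ∈ A then 1 else 0) ∂(P t)
          = (KE F A B)^[n] (fun _ => 0) t + (if s ∈ A then 1 else 0) := by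
        intro t
        rw [lintegral_add_right _ measurable_const, ih t]
        simp
      simp only [h1, if_false]
      simp_rw [key]
      rw [lintegral_add_right _ measurable_const]
      by_cases h2 : s ∈ A
      · simp only [h2, if_true]
        simp [nextTime]
        rfl
      · simp [h2, nextTime]
        rfl

/-- `K_E` is Scott continuous (on ω-chains of measurable functions), its least fixed
point is `μK_E = ⨆ n, K_E^n 0` (a fixed point below every measurable prefixed point),
and `E_{s₀}[step^{(A,B)}_{s₀}] = (μ K_E)(s₀)` for every initial state `s₀`. -/
theorem KE_scottContinuous_and_lfp_eq_expected_step
    (F : Kernel S S) [IsMarkovKernel F]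
    (P : Kernel S (ℕ → S)) [IsMarkovKernel P]
    (hP : ∀ s₀ : S, (P s₀ : Measure (ℕ → S)) = (F s₀).bind fun s₁ => (P s₁).map (prep s₁))
    (A B : Set S) (hA : MeasurableSet A) (hB : MeasurableSet B) :
    (∀ c : ℕ → S → ℝ≥0∞, (∀ n, Measurable (c n)) → Monotone c →
        KE F A B (fun x => ⨆ n, c n x) = fun x => ⨆ n, KE F A B (c n) x)
    ∧ KE F A B (fun x => ⨆ n, (KE F A B)^[n] (fun _ => 0) x)
        = (fun x => ⨆ n, (KE F A B)^[n] (fun _ => 0) x)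
    ∧ (∀ h : S → ℝ≥0∞, Measurable h → KE F A B h ≤ h →
        (fun x => ⨆ n, (KE F A B)^[n] (fun _ => 0) x) ≤ h)
    ∧ ∀ s₀ : S, ∫⁻ ω, (stepCount A B s₀ ω : ℝ≥0∞) ∂(P s₀)
        = ⨆ n, (KE F A B)^[n] (fun _ => 0) s₀ := by
  have hmeas : ∀ n, Measurable ((KE F A B)^[n] (fun _ => 0)) := by
    intro n
    induction n with
    | zero => exact measurable_const
    | succ n ih => rw [Function.iterate_succ_apply']; exact KE_meas F hA hB ih
  have hmono : Monotone (fun n => (KE F A B)^[n] (fun _ => 0)) :=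
    (KE_mono F A B).monotone_iterate_of_le_map (fun _ => zero_le)
  refine ⟨KE_sup F A B, ?_, ?_, ?_⟩
  · rw [KE_sup F A B _ hmeas hmono]
    ext x
    have h1 : ∀ n, KE F A B ((KE F A B)^[n] (fun _ => 0)) x
        = (KE F A B)^[n + 1] (fun _ => 0) x := fun n => by
      rw [Function.iterate_succ_apply']
    simp_rw [h1]
    exact Monotone.iSup_nat_add (f := fun n => (KE F A B)^[n] (fun _ => 0) x)
      (fun a b hab => hmono hab x) 1
  · intro h _ hh x
    refine iSup_le fun n => ?_
    revert x
    change (KE F A B)^[n] (fun _ => 0) ≤ h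
    induction n with
    | zero => intro x; exact zero_le
    | succ n ih =>
      rw [Function.iterate_succ_apply']
      exact (KE_mono F A B ih).trans hh
  · intro s
    simp_rw [stepCount_eq, ENNReal.tsum_eq_iSup_nat]
    rw [lintegral_iSup]
    · exact iSup_congr fun n => KE_iter F P hP hA hB n s
    · exact fun n => Finset.measurable_fun_sum _ fun i _ =>
        (uInd_meas hA hB i).comp measurable_prodMk_left
    · intro a b hab ω
      exact Finset.sum_le_sum_of_subset (Finset.range_mono hab)
end

section
/- Consider the deterministic transition function next on the state space S = {l₀, l₁} × ℕ × ℕ defined by next(l₀, m, n) = (l₁, n, n), next(l₁, m, n) = (l₁, m−1, n) if m > 0, and next(l₁, 0, n) = (l₀, 0, n+1). Let A = {l₁} × ℕ × ℕ and B = {l₀} × ℕ × ℕ. Then there exist no function r : S → [0,∞) and constants ε > 0, M > 0 such that for every x ∈ S, r(next(x)) ≤ r(x) − ε·1_{A∖B}(x) + M·1_B(x). In other words, no Streett supermartingale exists for this (deterministic) Markov chain with Streett pair (A, B). -/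
open Set

/-- The deterministic transition function of the program
`while true do (m := n; while m > 0 do m := m − 1; n := n + 1)`,
on the state space `{l₀, l₁} × ℕ × ℕ` (location `l₀` is `false`, `l₁` is `true`). -/
def nextState : Bool × ℕ × ℕ → Bool × ℕ × ℕ
  | (false, _, n) => (true, n, n)
  | (true, m, n) => if 0 < m then (true, m - 1, n) else (false, 0, n + 1)

/-- No Streett supermartingale exists for this deterministic Markov chain with
Streett pair `(A, B) = ({l₁} × ℕ × ℕ, {l₀} × ℕ × ℕ)`: there are no `r : S → [0,∞)`
and constants `ε > 0`, `M > 0` with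
`r (next x) ≤ r x − ε·1_{A∖B}(x) + M·1_B(x)` for all states `x`. -/
theorem no_streett_supermartingale :
    ¬ ∃ (r : Bool × ℕ × ℕ → ℝ) (ε M : ℝ),
        (∀ x, 0 ≤ r x) ∧ 0 < ε ∧ 0 < M ∧
        ∀ x : Bool × ℕ × ℕ,
          r (nextState x) ≤ r x
            - ε * ({x : Bool × ℕ × ℕ | x.1 = true} \
                    {x : Bool × ℕ × ℕ | x.1 = false}).indicator (fun _ => (1 : ℝ)) x
            + M * ({x : Bool × ℕ × ℕ | x.1 = false}).indicator (fun _ => (1 : ℝ)) x := by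
  rintro ⟨r, ε, M, hr, hε, hM, h⟩
  have h0 : ∀ m n, r (true, n, n) ≤ r (false, m, n) + M := by
    intro m n
    simpa [nextState, Set.indicator] using h (false, m, n)
  have h1 : ∀ m n, r (true, m, n) ≤ r (true, m + 1, n) - ε := by
    intro m n
    simpa [nextState, Set.indicator] using h (true, m + 1, n)
  have h2 : ∀ n, r (false, 0, n + 1) ≤ r (true, 0, n) - ε := by
    intro n
    simpa [nextState, Set.indicator] using h (true, 0, n)
  have h3 : ∀ n m : ℕ, r (false, 0, n + 1) ≤ r (true, m, n) - ε * ((m : ℝ) + 1) := by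
    intro n m
    induction m with
    | zero => simpa using h2 n
    | succ k ih =>
      have := h1 k n
      push_cast
      linarith
  have h4 : ∀ n : ℕ, r (false, 0, n) ≤
      r (false, 0, 0) + n * (M - ε * ((n : ℝ) + 1) / 2) := by
    intro n
    induction n with
    | zero => simp
    | succ k ih =>
      have a := h3 k k
      have b := h0 0 k
      push_cast
      linarith
  obtain ⟨n, hn⟩ := exists_nat_gt (2 * (M + r (false, 0, 0)) / ε)
  rw [div_lt_iff₀ hε] at hn
  have a0 := hr (false, 0, 0)
  have hnpos : (1 : ℝ) ≤ n := by
    rcases Nat.eq_zero_or_pos n with rfl | hp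
    · simp at hn
      linarith
    · exact_mod_cast hp
  have a := h4 n
  have b := hr (false, 0, n)
  have c : M - ε * ((n : ℝ) + 1) / 2 < - r (false, 0, 0) := by linarith
  nlinarith
end

section
/- Let (V, E, p) be a parity graph, i.e., V is a set (possibly infinite), E ⊆ V × V, and p : V → {1,…,d} is a priority function. If there exists a progress measure for (V, E, p) — a function r : V → ℕ^d such that for each (v, w) ∈ E, r(v) ≥_{p(v)} r(w) when p(v) is even and r(v) >_{p(v)} r(w) when p(v) is odd — then every infinite walk v₁ → v₂ → ⋯ in the graph (i.e., (v_i, v_{i+1}) ∈ E for all i) satisfies the parity condition: the minimum priority occurring infinitely often among p(v₁), p(v₂), … is even. -/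
open Set

/-- The truncated strict lexicographic ordering on `ℕ^d`: `a >_k b` iff the first
`k` components of `a` are lexicographically greater than those of `b`. -/
def natGtTrunc {d : ℕ} (k : ℕ) (a b : Fin d → ℕ) : Prop :=
  ∃ l : Fin d, (l : ℕ) < k ∧ (∀ i < l, a i = b i) ∧ b l < a l

/-- The truncated non-strict lexicographic ordering on `ℕ^d`: `a ≥_k b` iff the
first `k` components of `a` are lexicographically at least those of `b`. -/
def natGeTrunc {d : ℕ} (k : ℕ) (a b : Fin d → ℕ) : Prop :=
  natGtTrunc k a b ∨ ∀ i : Fin d, (i : ℕ) < k → a i = b i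

def truncLex {d : ℕ} (q : ℕ) (a : Fin d → ℕ) : Lex (Fin d → ℕ) :=
  toLex (fun i => if (i : ℕ) < q then a i else 0)

theorem truncLex_lt {d q : ℕ} {a b : Fin d → ℕ} (h : natGtTrunc q a b) :
    truncLex q b < truncLex q a := by
  obtain ⟨l, hl, he, hlt⟩ := h
  refine ⟨l, fun j hj => ?_, ?_⟩
  · simp [truncLex, he j hj]
  · simpa [truncLex, hl] using hlt

theorem truncLex_eq {d q : ℕ} {a b : Fin d → ℕ} (h : ∀ i : Fin d, (i : ℕ) < q → a i = b i) :
    truncLex q b = truncLex q a := by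
  unfold truncLex
  congr 1
  funext i
  split_ifs with hi
  · exact (h i hi).symm
  · rfl

theorem truncLex_le {d q k : ℕ} (hqk : q ≤ k) {a b : Fin d → ℕ} (h : natGeTrunc k a b) :
    truncLex q b ≤ truncLex q a := by
  rcases h with ⟨l, hl, he, hlt⟩ | h
  · by_cases hlq : (l : ℕ) < q
    · exact (truncLex_lt ⟨l, hlq, he, hlt⟩).le
    · exact (truncLex_eq fun i hi => he i (Fin.lt_def.2 (by omega))).le
  · exact (truncLex_eq fun i hi => h i (by omega)).le

/-- If a parity graph `(V, E, p)` (with priorities in `{1,…,d}`) admits a progress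
measure `r : V → ℕ^d` — i.e. along every edge `(v, w)`, `r v ≥_{p v} r w` when
`p v` is even and `r v >_{p v} r w` when `p v` is odd — then every infinite walk
satisfies the parity condition: the minimum priority occurring infinitely often
is even. -/
theorem progress_measure_implies_parity {V : Type*} (E : Set (V × V)) (d : ℕ)
    (p : V → ℕ) (hp : ∀ v, 1 ≤ p v ∧ p v ≤ d)
    (r : V → Fin d → ℕ)
    (hr : ∀ v w, (v, w) ∈ E →
      (Even (p v) → natGeTrunc (p v) (r v) (r w)) ∧
      (¬ Even (p v) → natGtTrunc (p v) (r v) (r w)))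
    (v : ℕ → V) (hwalk : ∀ i, (v i, v (i + 1)) ∈ E) :
    Even (sInf {q : ℕ | {i : ℕ | p (v i) = q}.Infinite}) := by
  by_contra hodd
  set S := {q : ℕ | {i : ℕ | p (v i) = q}.Infinite} with hS
  have hne : S.Nonempty := by
    by_contra h
    rw [Set.not_nonempty_iff_eq_empty] at h
    rw [h] at hodd
    simp at hodd
  have hq : sInf S ∈ S := Nat.sInf_mem hne
  have hmin : ∀ k < sInf S, k ∉ S := fun k hk => Nat.notMem_of_lt_sInf hk
  generalize sInf S = q at *
  have hfin : {i : ℕ | p (v i) < q}.Finite := by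
    have : {i : ℕ | p (v i) < q} = ⋃ k ∈ Set.Iio q, {i : ℕ | p (v i) = k} := by
      ext i; simp
    rw [this]
    exact (Set.finite_Iio q).biUnion fun k hk => Set.not_infinite.1 (hmin k hk)
  obtain ⟨N, hN⟩ := hfin.bddAbove
  have hge : ∀ i, N < i → q ≤ p (v i) := fun i hi => by
    by_contra h
    have := hN (show i ∈ {i : ℕ | p (v i) < q} from not_le.1 h)
    omega
  let f : ℕ → Lex (Fin d → ℕ) := fun n => truncLex q (r (v (N + 1 + n)))
  have hanti : Antitone f := antitone_nat_of_succ_le fun n => by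
    obtain ⟨h1, h2⟩ := hr _ _ (hwalk (N + 1 + n))
    refine truncLex_le (hge (N + 1 + n) (by omega)) ?_
    by_cases hev : Even (p (v (N + 1 + n)))
    · exact h1 hev
    · exact Or.inl (h2 hev)
  have wf : WellFounded ((· < ·) : Lex (Fin d → ℕ) → Lex (Fin d → ℕ) → Prop) := wellFounded_lt
  obtain ⟨_, ⟨m, rfl⟩, hm⟩ := wf.has_min (Set.range f) ⟨_, 0, rfl⟩
  obtain ⟨i, hi, him⟩ := Set.Infinite.exists_gt hq (N + 1 + m)
  obtain ⟨n, rfl⟩ : ∃ n, i = N + 1 + n := ⟨i - (N + 1), by omega⟩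
  have hi' : p (v (N + 1 + n)) = q := hi
  have hlt : f (n + 1) < f n := by
    have := (hr _ _ (hwalk (N + 1 + n))).2 (by rwa [hi'])
    rw [hi'] at this
    exact truncLex_lt this
  exact hm _ ⟨n + 1, rfl⟩ (hlt.trans_le (hanti (by omega)))
end

section
/- Let F : S → G(S) be a Markov chain on a measurable space S and let p : S → {1,…,d} be a measurable priority function. If there exists a progress-measure supermartingale for (F, p), then ℙ_{x₀}[Parity(p)] = 1 for every initial state x₀ ∈ S. -/
open MeasureTheory ProbabilityTheory Set
open scoped ENNReal NNReal

variable {S : Type*} [MeasurableSpace S]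

/-- The parity condition for a priority function `p`: the minimum priority
occurring infinitely often is even. -/
def parityEvent (p : S → ℕ) : Set (ℕ → S) :=
  {ω | Even (sInf {q : ℕ | {i : ℕ | p (ω i) = q}.Infinite})}

/-- The truncated strict lexicographic supermartingale ordering on `[0,∞]^d`,
comparing only the first `k` components: `r ≻_k r'` iff there is a level `l < k`
with `r i ≥ r' i` for all `i < l` and `r l ≥ 1 + r' l`. -/
def lexGTTrunc {d : ℕ} (k : ℕ) (r r' : Fin d → ℝ≥0∞) : Prop :=
  ∃ l : Fin d, (l : ℕ) < k ∧ (∀ i < l, r' i ≤ r i) ∧ r' l + 1 ≤ r l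

/-- The truncated non-strict lexicographic supermartingale ordering on `[0,∞]^d`:
the union of `≻_k` with the componentwise order on the first `k` components. -/
def lexGETrunc {d : ℕ} (k : ℕ) (r r' : Fin d → ℝ≥0∞) : Prop :=
  lexGTTrunc k r r' ∨ ∀ i : Fin d, (i : ℕ) < k → r' i ≤ r i

/-- The next-time operator applied componentwise: `(𝕏 r)(s) = ∫ r dF(s)`. -/
noncomputable def nextTimeV (F : Kernel S S) {m : ℕ} (r : S → Fin m → ℝ≥0∞) :
    S → Fin m → ℝ≥0∞ :=
  fun s i => ∫⁻ y, r y i ∂(F s)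

/-- A progress-measure supermartingale (PMSM) for `(F, p)` with priorities in
`{1,…,d}`: a measurable `[0,∞)^d`-valued function `r` with
`r(x) ⪰_{p(x)} (𝕏 r)(x)` when `p(x)` is even and `r(x) ≻_{p(x)} (𝕏 r)(x)` when
`p(x)` is odd. -/
def IsPMSM (F : Kernel S S) {d : ℕ} (p : S → ℕ) (r : S → Fin d → ℝ≥0∞) : Prop :=
  (∀ i, Measurable fun x => r x i) ∧ (∀ x i, r x i ≠ ⊤) ∧
    (∀ x, Even (p x) → lexGETrunc (p x) (r x) (nextTimeV F r x)) ∧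
    (∀ x, ¬ Even (p x) → lexGTTrunc (p x) (r x) (nextTimeV F r x))

open Filter

theorem pm_measurable_prep_pair :
    Measurable (fun z : S × (ℕ → S) => prep z.1 z.2) := by
  refine measurable_pi_iff.2 fun n => ?_
  cases n with
  | zero => exact measurable_fst
  | succ k => exact (measurable_pi_apply k).comp measurable_snd

theorem pm_measurable_prep (s : S) : Measurable (prep s) :=
  pm_measurable_prep_pair.comp (measurable_const.prodMk measurable_id)

theorem pm_measurable_step (P : Kernel S (ℕ → S)) [IsMarkovKernel P] :
    Measurable (fun s₁ : S => (P s₁).map (prep s₁)) := by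
  refine Measure.measurable_of_measurable_coe _ fun A hA => ?_
  have h : ∀ s₁ : S, (P s₁).map (prep s₁) A
      = P s₁ (Prod.mk s₁ ⁻¹' ((fun z : S × (ℕ → S) => prep z.1 z.2) ⁻¹' A)) := by
    intro s₁
    rw [Measure.map_apply (pm_measurable_prep s₁) hA]
    rfl
  simp_rw [h]
  exact Kernel.measurable_kernel_prodMk_left (pm_measurable_prep_pair hA)

theorem pm_lintegral (F : Kernel S S) (P : Kernel S (ℕ → S)) [IsMarkovKernel P]
    (hP : ∀ s₀ : S, (P s₀ : Measure (ℕ → S)) = (F s₀).bind fun s₁ => (P s₁).map (prep s₁))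
    (x : S) (f : (ℕ → S) → ℝ≥0∞) (hf : Measurable f) :
    ∫⁻ ω, f ω ∂(P x) = ∫⁻ s, ∫⁻ ω, f (prep s ω) ∂(P s) ∂(F x) := by
  conv_lhs => rw [hP x]
  rw [Measure.lintegral_bind (pm_measurable_step P).aemeasurable hf.aemeasurable]
  refine lintegral_congr fun s => ?_
  rw [lintegral_map hf (pm_measurable_prep s)]

theorem pm_measure (F : Kernel S S) (P : Kernel S (ℕ → S)) [IsMarkovKernel P]
    (hP : ∀ s₀ : S, (P s₀ : Measure (ℕ → S)) = (F s₀).bind fun s₁ => (P s₁).map (prep s₁))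
    (x : S) (A : Set (ℕ → S)) (hA : MeasurableSet A) :
    P x A = ∫⁻ s, P s (prep s ⁻¹' A) ∂(F x) := by
  conv_lhs => rw [hP x]
  rw [Measure.bind_apply hA (pm_measurable_step P).aemeasurable]
  refine lintegral_congr fun s => ?_
  rw [Measure.map_apply (pm_measurable_prep s) hA]

/-- Number of visits to `D` before time `n` and before leaving `G`. -/
noncomputable def pmV (G D : Set S) : ℕ → (ℕ → S) → ℝ≥0∞
  | 0, _ => 0
  | n + 1, ω => G.indicator 1 (ω 0) * (D.indicator 1 (ω 0) + pmV G D n (fun k => ω (k + 1)))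

theorem pmV_measurable {G D : Set S} (hG : MeasurableSet G) (hD : MeasurableSet D) (n : ℕ) :
    Measurable (pmV G D n) := by
  induction n with
  | zero => exact measurable_const
  | succ n ih =>
    have h1 : Measurable (G.indicator (1 : S → ℝ≥0∞)) := measurable_one.indicator hG
    have h2 : Measurable (D.indicator (1 : S → ℝ≥0∞)) := measurable_one.indicator hD
    have h0 : Measurable (fun ω : ℕ → S => ω 0) := measurable_pi_apply 0
    have hs : Measurable (fun (ω : ℕ → S) (k : ℕ) => ω (k + 1)) :=
      measurable_pi_iff.2 fun k => measurable_pi_apply (k + 1)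
    exact (h1.comp h0).mul ((h2.comp h0).add (ih.comp hs))

theorem pmV_mono (G D : Set S) (n : ℕ) : ∀ ω, pmV G D n ω ≤ pmV G D (n + 1) ω := by
  induction n with
  | zero => intro ω; simp [pmV]
  | succ n ih =>
    intro ω
    rw [pmV, pmV]
    gcongr
    exact ih _

theorem pmV_eq (G D : Set S) (n : ℕ) : ∀ ω : ℕ → S, (∀ m, ω m ∈ G) →
    pmV G D n ω = ∑ m ∈ Finset.range n, D.indicator 1 (ω m) := by
  induction n with
  | zero => intro ω _; simp [pmV]
  | succ n ih =>
    intro ω h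
    rw [pmV, ih _ (fun m => h (m + 1)), Finset.sum_range_succ', indicator_of_mem (h 0), add_comm]
    simp

theorem pmV_le (F : Kernel S S) (P : Kernel S (ℕ → S)) [IsMarkovKernel P]
    (hP : ∀ s₀ : S, (P s₀ : Measure (ℕ → S)) = (F s₀).bind fun s₁ => (P s₁).map (prep s₁))
    {G D : Set S} (hG : MeasurableSet G) (hD : MeasurableSet D) (f : S → ℝ≥0∞)
    (h : ∀ x ∈ G, ∫⁻ y, f y ∂(F x) + D.indicator 1 x ≤ f x) (n : ℕ) :
    ∀ x, ∫⁻ ω, pmV G D n (prep x ω) ∂(P x) ≤ f x := by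
  induction n with
  | zero => intro x; simp [pmV]
  | succ n ih =>
    intro x
    have e : ∀ ω, pmV G D (n + 1) (prep x ω)
        = G.indicator 1 x * (D.indicator 1 x + pmV G D n ω) := fun ω => rfl
    simp_rw [e]
    by_cases hx : x ∈ G
    · simp only [indicator_of_mem hx, Pi.one_apply, one_mul]
      rw [lintegral_add_left measurable_const, lintegral_const, measure_univ, mul_one,
        pm_lintegral F P hP x _ (pmV_measurable hG hD n), add_comm]
      refine le_trans ?_ (h x hx)
      gcongr with s
      exact ih s
    · simp [indicator_of_notMem hx]

theorem pm_null (F : Kernel S S) (P : Kernel S (ℕ → S)) [IsMarkovKernel P]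
    (hP : ∀ s₀ : S, (P s₀ : Measure (ℕ → S)) = (F s₀).bind fun s₁ => (P s₁).map (prep s₁))
    {G D : Set S} (hG : MeasurableSet G) (hD : MeasurableSet D) (f : S → ℝ≥0∞)
    (hf : ∀ x, f x ≠ ⊤)
    (h : ∀ x ∈ G, ∫⁻ y, f y ∂(F x) + D.indicator 1 x ≤ f x) (x : S) :
    ∀ᵐ ω ∂(P x), (∀ᶠ n in atTop, ω n ∈ G) → ¬ ∃ᶠ n in atTop, ω n ∈ D := by
  let N : Set (ℕ → S) := {ω | (∀ m, ω m ∈ G) ∧ ∃ᶠ n in atTop, ω n ∈ D}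
  have hN : MeasurableSet N := by
    have : N = (⋂ m, (fun ω : ℕ → S => ω m) ⁻¹' G) ∩
        ⋂ a, ⋃ b, ⋃ (_ : a ≤ b), (fun ω : ℕ → S => ω b) ⁻¹' D := by
      ext ω
      simp [N, frequently_atTop]
    rw [this]
    refine (MeasurableSet.iInter fun m => measurable_pi_apply m hG).inter ?_
    exact MeasurableSet.iInter fun a => MeasurableSet.iUnion fun b =>
      MeasurableSet.iUnion fun _ => measurable_pi_apply b hD
  have key : ∀ s, P s (prep s ⁻¹' N) = 0 := by
    intro s
    have hm : ∀ n, Measurable fun ω => pmV G D n (prep s ω) := fun n =>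
      (pmV_measurable hG hD n).comp (pm_measurable_prep s)
    have hle : ∫⁻ ω, ⨆ n, pmV G D n (prep s ω) ∂(P s) ≤ f s := by
      rw [lintegral_iSup hm
        (monotone_nat_of_le_succ fun n => fun ω => pmV_mono G D n (prep s ω))]
      exact iSup_le fun n => pmV_le F P hP hG hD f h n s
    have hfin := ae_lt_top (Measurable.iSup hm) (ne_top_of_le_ne_top (hf s) hle)
    rw [← compl_mem_ae_iff]
    filter_upwards [hfin] with ω hω hmem
    obtain ⟨hm1, hm2⟩ : (∀ m, prep s ω m ∈ G) ∧ ∃ᶠ n in atTop, prep s ω n ∈ D := hmem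
    refine hω.ne ?_
    simp_rw [fun n => pmV_eq G D n (prep s ω) hm1]
    rw [← ENNReal.tsum_eq_iSup_nat]
    have hinf : {n | prep s ω n ∈ D}.Infinite := Nat.frequently_atTop_iff_infinite.1 hm2
    have e : ∀ m, D.indicator (1 : S → ℝ≥0∞) (prep s ω m)
        = {n | prep s ω n ∈ D}.indicator (fun _ => (1 : ℝ≥0∞)) m := fun m => rfl
    simp_rw [e]
    rw [← tsum_subtype]
    haveI := hinf.to_subtype
    exact ENNReal.tsum_const_eq_top_of_ne_zero one_ne_zero
  have hsm : ∀ n : ℕ, MeasurableSet {ω : ℕ → S | (fun k => ω (k + n)) ∈ N} := fun n =>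
    (measurable_pi_iff.2 fun k => measurable_pi_apply (k + n) :
      Measurable fun (ω : ℕ → S) (k : ℕ) => ω (k + n)) hN
  have shift : ∀ n : ℕ, ∀ s, P s {ω | (fun k => ω (k + n)) ∈ N} = 0 := by
    intro n
    induction n with
    | zero =>
      intro s
      rw [pm_measure F P hP s _ (hsm 0)]
      exact (lintegral_congr fun t => key t).trans lintegral_zero
    | succ n ih =>
      intro s
      rw [pm_measure F P hP s _ (hsm (n + 1))]
      exact (lintegral_congr fun t => ih t).trans lintegral_zero
  have hall : ∀ᵐ ω ∂(P x), ∀ n : ℕ, ¬ (fun k => ω (k + n)) ∈ N := by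
    rw [ae_all_iff]
    intro n
    rw [ae_iff]
    simpa using shift n x
  filter_upwards [hall] with ω hω h1 h2
  obtain ⟨n, hn⟩ := eventually_atTop.1 h1
  refine hω n ⟨fun m => hn _ (Nat.le_add_left _ _), ?_⟩
  rw [frequently_atTop] at h2 ⊢
  intro a
  obtain ⟨b, hb, hbD⟩ := h2 (a + n)
  refine ⟨b - n, by omega, ?_⟩
  have : b - n + n = b := by omega
  simpa [this] using hbD

/-- States of priority at least `q` where the measure strictly decreases at level `l`. -/
def pmD (F : Kernel S S) {d : ℕ} (p : S → ℕ) (r : S → Fin d → ℝ≥0∞) (q : ℕ) (l : Fin d) :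
    Set S :=
  {x | q ≤ p x ∧ (∀ i < l, nextTimeV F r x i ≤ r x i) ∧ nextTimeV F r x l + 1 ≤ r x l}

def pmG (F : Kernel S S) {d : ℕ} (p : S → ℕ) (r : S → Fin d → ℝ≥0∞) (q : ℕ) (l : Fin d) :
    Set S :=
  {x | q ≤ p x ∧ ∀ i < l, x ∉ pmD F p r q i}

/-- If a progress-measure supermartingale exists for `(F, p)`, then the parity
condition for `p` holds almost surely from every initial state. -/
theorem PMSM_implies_parity_as
    (F : Kernel S S) [IsMarkovKernel F]
    (P : Kernel S (ℕ → S)) [IsMarkovKernel P]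
    (hP : ∀ s₀ : S, (P s₀ : Measure (ℕ → S)) = (F s₀).bind fun s₁ => (P s₁).map (prep s₁))
    (d : ℕ) (p : S → ℕ) (hpm : Measurable p) (hp : ∀ x, 1 ≤ p x ∧ p x ≤ d)
    (hPMSM : ∃ r : S → Fin d → ℝ≥0∞, IsPMSM F p r) :
    ∀ x₀ : S, P x₀ (parityEvent p) = 1 := by
  obtain ⟨r, hrm, hrt, hre, hro⟩ := hPMSM
  intro x₀
  have hXm : ∀ i, Measurable fun x => nextTimeV F r x i := fun i =>
    (hrm i).lintegral_kernel
  have hqm : ∀ q, MeasurableSet {x | q ≤ p x} := fun q =>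
    measurableSet_le measurable_const hpm
  have hDm : ∀ q l, MeasurableSet (pmD F p r q l) := by
    intro q l
    refine (hqm q).inter (MeasurableSet.inter ?_ ?_)
    · have : {x | ∀ i < l, nextTimeV F r x i ≤ r x i}
          = ⋂ i, ⋂ (_ : i < l), {x | nextTimeV F r x i ≤ r x i} := by
        ext; simp
      change MeasurableSet {x | ∀ i < l, nextTimeV F r x i ≤ r x i}
      rw [this]
      exact MeasurableSet.iInter fun i => MeasurableSet.iInter fun _ =>
        measurableSet_le (hXm i) (hrm i)
    · exact measurableSet_le ((hXm l).add_const 1) (hrm l)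
  have hGm : ∀ q l, MeasurableSet (pmG F p r q l) := by
    intro q l
    refine (hqm q).inter ?_
    have : {x | ∀ i < l, x ∉ pmD F p r q i} = ⋂ i, ⋂ (_ : i < l), (pmD F p r q i)ᶜ := by
      ext; simp
    change MeasurableSet {x | ∀ i < l, x ∉ pmD F p r q i}
    rw [this]
    exact MeasurableSet.iInter fun i => MeasurableSet.iInter fun _ => (hDm q i).compl
  have hge : ∀ x, lexGETrunc (p x) (r x) (nextTimeV F r x) := by
    intro x
    by_cases hx : Even (p x)
    · exact hre x hx
    · exact Or.inl (hro x hx)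
  have hdec : ∀ q (l : Fin d), (l : ℕ) < q → ∀ x ∈ pmG F p r q l,
      ∫⁻ y, r y l ∂(F x) + (pmD F p r q l).indicator 1 x ≤ r x l := by
    intro q l hl x hx
    by_cases hxD : x ∈ pmD F p r q l
    · rw [indicator_of_mem hxD]
      exact hxD.2.2
    · rw [indicator_of_notMem hxD, add_zero]
      rcases hge x with ⟨l', h1, h2, h3⟩ | h'
      · rcases lt_trichotomy l' l with hlt | heq | hgt
        · exact absurd ⟨hx.1, h2, h3⟩ (hx.2 l' hlt)
        · subst heq
          exact absurd ⟨hx.1, h2, h3⟩ hxD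
        · exact h2 l hgt
      · exact h' l (lt_of_lt_of_le hl hx.1)
  have hae : ∀ᵐ ω ∂(P x₀), ∀ q : ℕ, ∀ l : Fin d, (l : ℕ) < q →
      (∀ᶠ n in atTop, ω n ∈ pmG F p r q l) → ¬ ∃ᶠ n in atTop, ω n ∈ pmD F p r q l := by
    rw [ae_all_iff]
    intro q
    rw [ae_all_iff]
    intro l
    by_cases hl : (l : ℕ) < q
    · filter_upwards [pm_null F P hP (hGm q l) (hDm q l) (fun x => r x l) (fun x => hrt x l)
        (hdec q l hl) x₀] with ω hω _
      exact hω
    · exact Eventually.of_forall fun ω h => absurd h hl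
  have hpar : ∀ᵐ ω ∂(P x₀), ω ∈ parityEvent p := by
    filter_upwards [hae] with ω hω
    change Even (sInf {q : ℕ | {i : ℕ | p (ω i) = q}.Infinite})
    set Q := {q : ℕ | {i : ℕ | p (ω i) = q}.Infinite} with hQ
    have hne : Q.Nonempty := by
      by_contra hcon
      rw [Set.not_nonempty_iff_eq_empty] at hcon
      have hfin : ∀ q, {i : ℕ | p (ω i) = q}.Finite := by
        intro q
        by_contra hq
        have : q ∈ Q := hq
        rw [hcon] at this
        exact this
      have hU : (⋃ q ∈ Set.Iic d, {i : ℕ | p (ω i) = q}).Finite :=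
        (Set.finite_Iic d).biUnion fun q _ => hfin q
      refine Set.infinite_univ (hU.subset fun i _ => ?_)
      simp only [mem_iUnion]
      exact ⟨p (ω i), (hp _).2, rfl⟩
    have hqQ : sInf Q ∈ Q := Nat.sInf_mem hne
    have hmin : ∀ c < sInf Q, {i : ℕ | p (ω i) = c}.Finite := by
      intro c hc
      by_contra hcon
      exact Nat.notMem_of_lt_sInf hc hcon
    generalize sInf Q = q at hqQ hmin ⊢
    by_contra hodd
    have hev : ∀ᶠ n in atTop, q ≤ p (ω n) := by
      have hU : (⋃ c ∈ Set.Iio q, {i : ℕ | p (ω i) = c}).Finite :=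
        (Set.finite_Iio q).biUnion fun c hc => hmin c hc
      rw [← Nat.cofinite_eq_atTop]
      filter_upwards [hU.compl_mem_cofinite] with n hn
      by_contra hlt
      apply hn
      simp only [mem_iUnion]
      exact ⟨p (ω n), not_le.1 hlt, rfl⟩
    have hnD : ∀ k : ℕ, ∀ l : Fin d, (l : ℕ) = k → (l : ℕ) < q →
        ∀ᶠ n in atTop, ω n ∉ pmD F p r q l := by
      intro k
      induction k using Nat.strong_induction_on with
      | _ k ih =>
        intro l hlk hl
        have hG : ∀ᶠ n in atTop, ω n ∈ pmG F p r q l := by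
          have h2 : ∀ᶠ n in atTop, ∀ i : Fin d, i < l → ω n ∉ pmD F p r q i := by
            rw [eventually_all]
            intro i
            by_cases hi : i < l
            · have hi' : (i : ℕ) < l := hi
              filter_upwards [ih i (hlk ▸ hi') i rfl (hi'.trans hl)] with n hn _
              exact hn
            · exact Eventually.of_forall fun n h => absurd h hi
          filter_upwards [hev, h2] with n h1 h2
          exact ⟨h1, h2⟩
        exact not_frequently.1 (hω q l hl hG)
    have hnD' : ∀ᶠ n in atTop, ∀ l : Fin d, (l : ℕ) < q → ω n ∉ pmD F p r q l := by
      rw [eventually_all]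
      intro l
      by_cases hl : (l : ℕ) < q
      · filter_upwards [hnD l l rfl hl] with n hn _
        exact hn
      · exact Eventually.of_forall fun n h => absurd h hl
    have hfr : ∃ᶠ n in atTop, p (ω n) = q := Nat.frequently_atTop_iff_infinite.2 hqQ
    obtain ⟨n, hn1, hn2⟩ := (hfr.and_eventually hnD').exists
    obtain ⟨l, h1, h2, h3⟩ := hro (ω n) (by rw [hn1]; exact hodd)
    exact hn2 l (hn1 ▸ h1) ⟨hn1.ge, h2, h3⟩
  exact (measure_congr (eventuallyEq_univ.2 hpar)).trans measure_univ
end
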